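/- arXiv:2410.13347 — 2 statements merged into one kernel-verified Lean document; each statement's English description precedes it below -/
import Mathlib

section
/- (Abstract fixed-metric form of Proposition 1.1, local Lipschitz continuity.) Assume the pair (a,e) satisfies the Poincaré hypothesis. Let k ≥ 1 be an integer and let β₀ be a continuous symmetric bilinear form on H with β₀(φ,φ) ≥ 0 for all φ, β₀(e,e) > 0 and λ_k(β₀) < +∞. Then there exist ε₀ > 0 and M ≥ 0 such that for all continuous symmetric bilinear forms β₁, β₂ on H with βᵢ(φ,φ) ≥ 0 for all φ, βᵢ(e,e) > 0, ‖βᵢ − β₀‖ ≤ ε₀ and λ_k(βᵢ) ≤ λ_k(β₀) + 1 (i = 1,2), one has |λ_k(β₁) − λ_k(β₂)| ≤ M‖β₁ − β₂‖. -/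
open scoped ENNReal

/-- The quotient A/B with the convention `+∞` if `B = 0 < A` and `0` if both vanish. -/
noncomputable def rayleighQuot (A B : ℝ) : ℝ≥0∞ :=
  if B = 0 then (if A = 0 then 0 else ⊤) else ENNReal.ofReal (A / B)

/-- The `k`-th generalized eigenvalue `λ_k(β)`: the infimum over all `k`-dimensional
subspaces `V` of `{φ : β(e,φ) = 0}` of `sup_{φ ∈ V, φ ≠ 0} a(φ,φ)/β(φ,φ)`. -/
noncomputable def genEigenvalue {H : Type*} [NormedAddCommGroup H] [InnerProductSpace ℝ H]
    (a : H →L[ℝ] H →L[ℝ] ℝ) (e : H) (k : ℕ) (β : H →L[ℝ] H →L[ℝ] ℝ) : ℝ≥0∞ :=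
  ⨅ (V : Submodule ℝ H) (_ : Module.finrank ℝ V = k ∧ ∀ φ ∈ V, β e φ = 0),
    ⨆ (φ : H) (_ : φ ∈ V ∧ φ ≠ 0), rayleighQuot (a φ φ) (β φ φ)

/-- The Poincaré hypothesis for the pair `(a, e)`. -/
def PoincareHyp {H : Type*} [NormedAddCommGroup H] [InnerProductSpace ℝ H]
    (a : H →L[ℝ] H →L[ℝ] ℝ) (e : H) : Prop :=
  ∃ C₀ : ℝ, 0 ≤ C₀ ∧ ∀ ℓ : H →L[ℝ] ℝ, ℓ e = 1 → ∀ φ : H, ℓ φ = 0 →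
    ‖φ‖ ^ 2 ≤ (C₀ * ‖ℓ‖ ^ 2 + 1) * a φ φ

/-!
Since `e` lies in the radical of `a`, projecting along `e` onto `{φ : β₂(e,φ) = 0}` does not change
the energy `a`, and on `{φ : β₁(e,φ) = 0}` it is injective and alters the denominators only by
`O(‖β₁ - β₂‖ ‖φ‖²)`. The Poincaré inequality bounds this by `D a(φ,φ)` with `D = O(‖β₁ - β₂‖)`.
Transporting nearly optimal subspaces gives `λ_k(β₂) ≤ λ_k(β₁) + D λ_k(β₁) λ_k(β₂)`, which is a
Lipschitz estimate wherever `λ_k` is bounded.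
-/

open Metric
open scoped NNReal

section Forms

variable {E : Type*} [SeminormedAddCommGroup E] [NormedSpace ℝ E]

/-- The `β`-orthogonal projection along `e` onto the hyperplane `{φ : β(e,φ) = 0}`. It carries
subspaces admissible for one form to subspaces admissible for another. The inverse makes this the
identity map when `β(e,e) = 0`. -/
noncomputable def projAlong (β : E →L[ℝ] E →L[ℝ] ℝ) (e : E) : E →ₗ[ℝ] E :=
  LinearMap.id - ((β e e)⁻¹ • (β e).toLinearMap).smulRight e

variable {a β β₁ β₂ : E →L[ℝ] E →L[ℝ] ℝ} {e φ : E}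

lemma projAlong_apply (β : E →L[ℝ] E →L[ℝ] ℝ) (e φ : E) :
    projAlong β e φ = φ - ((β e e)⁻¹ * β e φ) • e := by
  simp [projAlong]

lemma apply_projAlong (he : β e e ≠ 0) (φ : E) : β e (projAlong β e φ) = 0 := by
  rw [projAlong_apply, map_sub, map_smul, smul_eq_mul]
  field_simp
  ring

lemma apply_projAlong_self (hβ_symm : ∀ φ ψ, β φ ψ = β ψ φ) (he : β e e ≠ 0) (φ : E) :
    β (projAlong β e φ) (projAlong β e φ) = β φ φ - β e φ ^ 2 / β e e := by
  simp only [projAlong_apply, map_sub, map_smul, sub_apply,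
    smul_apply, smul_eq_mul, hβ_symm φ e]
  field_simp
  ring

lemma apply_projAlong_self_of_apply_eq_zero (ha_symm : ∀ φ ψ, a φ ψ = a ψ φ)
    (he : ∀ ψ, a e ψ = 0) (β : E →L[ℝ] E →L[ℝ] ℝ) (φ : E) :
    a (projAlong β e φ) (projAlong β e φ) = a φ φ := by
  simp [projAlong_apply, he, ha_symm φ e]

lemma eq_zero_of_projAlong_eq_zero (he : β₁ e e ≠ 0) (hφ : β₁ e φ = 0)
    (h : projAlong β₂ e φ = 0) : φ = 0 := by
  rw [projAlong_apply, sub_eq_zero] at h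
  rw [h, map_smul, smul_eq_mul, mul_eq_zero] at hφ
  rw [h, hφ.resolve_right he, zero_smul]

lemma finrank_map_projAlong (he : β₁ e e ≠ 0) (β₂ : E →L[ℝ] E →L[ℝ] ℝ) {V : Submodule ℝ E}
    (hV : ∀ φ ∈ V, β₁ e φ = 0) :
    Module.finrank ℝ (V.map (projAlong β₂ e)) = Module.finrank ℝ V := by
  rw [← LinearMap.range_domRestrict]
  refine LinearMap.finrank_range_of_inj ?_
  rw [← LinearMap.ker_eq_bot, LinearMap.ker_eq_bot']
  exact fun φ hφ => Subtype.ext (eq_zero_of_projAlong_eq_zero he (hV φ φ.2) hφ)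

lemma abs_sub_apply_le_norm_sub (β₁ β₂ : E →L[ℝ] E →L[ℝ] ℝ) (φ ψ : E) :
    |β₁ φ ψ - β₂ φ ψ| ≤ ‖β₁ - β₂‖ * ‖φ‖ * ‖ψ‖ := by
  simpa using (β₁ - β₂).le_opNorm₂ φ ψ

lemma sq_apply_le_norm_sub_of_apply_eq_zero (hφ : β₁ e φ = 0) :
    β₂ e φ ^ 2 ≤ ‖β₂‖ * ‖e‖ ^ 2 * ‖β₁ - β₂‖ * ‖φ‖ ^ 2 := by
  have h_small : |β₂ e φ| ≤ ‖β₁ - β₂‖ * ‖e‖ * ‖φ‖ := by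
    simpa [hφ] using abs_sub_apply_le_norm_sub β₁ β₂ e φ
  have h_bound : |β₂ e φ| ≤ ‖β₂‖ * ‖e‖ * ‖φ‖ := β₂.le_opNorm₂ e φ
  calc β₂ e φ ^ 2 = |β₂ e φ| * |β₂ e φ| := by rw [abs_mul_abs_self, sq]
    _ ≤ (‖β₂‖ * ‖e‖ * ‖φ‖) * (‖β₁ - β₂‖ * ‖e‖ * ‖φ‖) := by gcongr
    _ = ‖β₂‖ * ‖e‖ ^ 2 * ‖β₁ - β₂‖ * ‖φ‖ ^ 2 := by ring

lemma apply_self_le_apply_projAlong_self_add (hβ₂_symm : ∀ φ ψ, β₂ φ ψ = β₂ ψ φ)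
    (he : 0 < β₂ e e) (hφ : β₁ e φ = 0) :
    β₁ φ φ ≤ β₂ (projAlong β₂ e φ) (projAlong β₂ e φ)
      + (1 + ‖β₂‖ * ‖e‖ ^ 2 / β₂ e e) * ‖β₁ - β₂‖ * ‖φ‖ ^ 2 := by
  have h_diff : β₁ φ φ - β₂ φ φ ≤ ‖β₁ - β₂‖ * ‖φ‖ ^ 2 := by
    rw [sq, ← mul_assoc]
    exact (le_abs_self _).trans (abs_sub_apply_le_norm_sub β₁ β₂ φ φ)
  have h_proj : β₂ e φ ^ 2 / β₂ e e ≤ ‖β₂‖ * ‖e‖ ^ 2 / β₂ e e * ‖β₁ - β₂‖ * ‖φ‖ ^ 2 := by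
    calc β₂ e φ ^ 2 / β₂ e e ≤ ‖β₂‖ * ‖e‖ ^ 2 * ‖β₁ - β₂‖ * ‖φ‖ ^ 2 / β₂ e e := by
          gcongr
          exact sq_apply_le_norm_sub_of_apply_eq_zero hφ
      _ = ‖β₂‖ * ‖e‖ ^ 2 / β₂ e e * ‖β₁ - β₂‖ * ‖φ‖ ^ 2 := by ring
  rw [apply_projAlong_self hβ₂_symm he.ne']
  linarith

lemma eventually_lt_apply_self_and_norm_lt {r N : ℝ} (hr : r < β e e) (hN : ‖β‖ < N) :
    ∀ᶠ γ in nhds β, r < γ e e ∧ ‖γ‖ < N := by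
  have h_cont : Continuous fun γ : E →L[ℝ] E →L[ℝ] ℝ => γ e e := by fun_prop
  exact ((h_cont.tendsto β).eventually_const_lt hr).and
    ((continuous_norm.tendsto β).eventually_lt_const hN)

end Forms

lemma rayleighQuot_le_ofReal_iff {A B L : ℝ} (hA : 0 ≤ A) (hB : 0 ≤ B) (hL : 0 ≤ L) :
    rayleighQuot A B ≤ ENNReal.ofReal L ↔ A ≤ L * B := by
  unfold rayleighQuot
  split_ifs with hB₀ hA₀
  · simp [hB₀, hA₀]
  · simp [hB₀, hA.lt_of_ne' hA₀]
  · rw [ENNReal.ofReal_le_ofReal_iff hL, div_le_iff₀ (hB.lt_of_ne' hB₀)]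

section Eigenvalue

variable {H : Type*} [NormedAddCommGroup H] [InnerProductSpace ℝ H]
  {a β β₁ β₂ : H →L[ℝ] H →L[ℝ] ℝ} {e : H} {k : ℕ} {D L : ℝ}

lemma genEigenvalue_le_ofReal (ha : ∀ φ, 0 ≤ a φ φ) (hβ : ∀ φ, 0 ≤ β φ φ) (hL : 0 ≤ L)
    {V : Submodule ℝ H} (hVk : Module.finrank ℝ V = k) (hVe : ∀ φ ∈ V, β e φ = 0)
    (hV : ∀ φ ∈ V, a φ φ ≤ L * β φ φ) :
    genEigenvalue a e k β ≤ ENNReal.ofReal L :=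
  iInf₂_le_of_le V ⟨hVk, hVe⟩ <| iSup₂_le fun φ hφ =>
    (rayleighQuot_le_ofReal_iff (ha φ) (hβ φ) hL).2 (hV φ hφ.1)

lemma exists_submodule_of_genEigenvalue_lt (ha : ∀ φ, 0 ≤ a φ φ) (hβ : ∀ φ, 0 ≤ β φ φ)
    (h : genEigenvalue a e k β < ENNReal.ofReal L) :
    ∃ V : Submodule ℝ H, Module.finrank ℝ V = k ∧ (∀ φ ∈ V, β e φ = 0) ∧
      ∀ φ ∈ V, a φ φ ≤ L * β φ φ := by
  have hL : 0 ≤ L := (ENNReal.ofReal_pos.1 (pos_of_gt h)).le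
  simp only [genEigenvalue, iInf_lt_iff] at h
  obtain ⟨V, ⟨hVk, hVe⟩, hV⟩ := h
  refine ⟨V, hVk, hVe, fun φ hφ => ?_⟩
  rcases eq_or_ne φ 0 with rfl | hφ₀
  · simp
  · exact (rayleighQuot_le_ofReal_iff (ha φ) (hβ φ) hL).1
      ((le_iSup₂_of_le φ ⟨hφ, hφ₀⟩ le_rfl).trans hV.le)

lemma genEigenvalue_le_ofReal_div (ha_symm : ∀ φ ψ, a φ ψ = a ψ φ) (ha : ∀ φ, 0 ≤ a φ φ)
    (he : ∀ ψ, a e ψ = 0) (hβ₁ : ∀ φ, 0 ≤ β₁ φ φ) (hβ₁e : β₁ e e ≠ 0)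
    (hβ₂ : ∀ φ, 0 ≤ β₂ φ φ) (hβ₂e : β₂ e e ≠ 0)
    (hD : ∀ φ, β₁ e φ = 0 →
      β₁ φ φ ≤ β₂ (projAlong β₂ e φ) (projAlong β₂ e φ) + D * a φ φ)
    (hL : genEigenvalue a e k β₁ < ENNReal.ofReal L) (hLD : L * D < 1) :
    genEigenvalue a e k β₂ ≤ ENNReal.ofReal (L / (1 - L * D)) := by
  have hL₀ : 0 < L := ENNReal.ofReal_pos.1 (pos_of_gt hL)
  have hLD' : 0 < 1 - L * D := sub_pos.2 hLD
  obtain ⟨V, hVk, hVe, hV⟩ := exists_submodule_of_genEigenvalue_lt ha hβ₁ hL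
  refine genEigenvalue_le_ofReal (V := V.map (projAlong β₂ e)) ha hβ₂ (by positivity)
    ((finrank_map_projAlong hβ₁e β₂ hVe).trans hVk) ?_ ?_
  · rintro _ ⟨φ, -, rfl⟩
    exact apply_projAlong hβ₂e φ
  · rintro _ ⟨φ, hφ, rfl⟩
    have h : a φ φ ≤ L * (β₂ (projAlong β₂ e φ) (projAlong β₂ e φ) + D * a φ φ) :=
      (hV φ hφ).trans (mul_le_mul_of_nonneg_left (hD φ (hVe φ hφ)) hL₀.le)
    rw [apply_projAlong_self_of_apply_eq_zero ha_symm he, div_mul_eq_mul_div, le_div_iff₀ hLD']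
    linarith

-- Dividing by `λ_k(β₁) λ_k(β₂)` gives `1 / λ_k(β₁) ≤ 1 / λ_k(β₂) + D`: the reciprocal
-- eigenvalue is the quantity that varies linearly with the form.
lemma toReal_genEigenvalue_le_add_mul (ha_symm : ∀ φ ψ, a φ ψ = a ψ φ) (ha : ∀ φ, 0 ≤ a φ φ)
    (he : ∀ ψ, a e ψ = 0) (hβ₁ : ∀ φ, 0 ≤ β₁ φ φ) (hβ₁e : β₁ e e ≠ 0)
    (hβ₂ : ∀ φ, 0 ≤ β₂ φ φ) (hβ₂e : β₂ e e ≠ 0) (hD₀ : 0 ≤ D)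
    (hD : ∀ φ, β₁ e φ = 0 →
      β₁ φ φ ≤ β₂ (projAlong β₂ e φ) (projAlong β₂ e φ) + D * a φ φ)
    (hfin : genEigenvalue a e k β₁ ≠ ⊤) :
    (genEigenvalue a e k β₂).toReal ≤ (genEigenvalue a e k β₁).toReal
      + D * ((genEigenvalue a e k β₁).toReal * (genEigenvalue a e k β₂).toReal) := by
  set l₁ := (genEigenvalue a e k β₁).toReal
  set l₂ := (genEigenvalue a e k β₂).toReal
  have hl₂ : 0 ≤ l₂ := ENNReal.toReal_nonneg
  have h_above : ∀ L > l₁, l₂ * (1 - L * D) ≤ L := by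
    intro L hL
    have hL₀ : 0 ≤ L := ENNReal.toReal_nonneg.trans hL.le
    rcases lt_or_ge (L * D) 1 with hLD | hLD
    · have hLD' : 0 < 1 - L * D := sub_pos.2 hLD
      rw [← le_div_iff₀ hLD']
      exact ENNReal.toReal_le_of_le_ofReal (by positivity) <|
        genEigenvalue_le_ofReal_div ha_symm ha he hβ₁ hβ₁e hβ₂ hβ₂e hD
          ((ENNReal.lt_ofReal_iff_toReal_lt hfin).2 hL) hLD
    · exact (mul_nonpos_of_nonneg_of_nonpos hl₂ (sub_nonpos.2 hLD)).trans hL₀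
  have h_ratio : l₂ / (1 + D * l₂) ≤ l₁ := by
    refine le_of_forall_gt_imp_ge_of_dense fun L hL => ?_
    rw [div_le_iff₀ (by positivity)]
    linarith [h_above L hL]
  rw [div_le_iff₀ (by positivity)] at h_ratio
  linarith

lemma PoincareHyp.exists_norm_sq_le (h : PoincareHyp a e) (ha : ∀ φ, 0 ≤ a φ φ) {m : ℝ}
    (hm : 0 < m) (N : ℝ) :
    ∃ C : ℝ≥0, ∀ β : H →L[ℝ] H →L[ℝ] ℝ, m ≤ β e e → ‖β‖ ≤ N →
      ∀ φ, β e φ = 0 → ‖φ‖ ^ 2 ≤ C * a φ φ := by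
  obtain ⟨C₀, hC₀, hP⟩ := h
  refine ⟨⟨C₀ * (N * ‖e‖ / m) ^ 2 + 1, by positivity⟩, fun β hβm hβN φ hφ => ?_⟩
  have hβe : 0 < β e e := hm.trans_le hβm
  have hN : 0 ≤ N := (norm_nonneg β).trans hβN
  have h_norm : ‖(β e e)⁻¹ • β e‖ ≤ N * ‖e‖ / m := by
    rw [norm_smul, norm_inv, Real.norm_of_nonneg hβe.le, inv_mul_eq_div]
    gcongr
    exact β.le_of_opNorm_le hβN e
  calc ‖φ‖ ^ 2 ≤ (C₀ * ‖(β e e)⁻¹ • β e‖ ^ 2 + 1) * a φ φ :=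
        hP _ (by simp [hβe.ne']) φ (by simp [hφ])
    _ ≤ (C₀ * (N * ‖e‖ / m) ^ 2 + 1) * a φ φ := by
        have := ha φ
        gcongr

lemma PoincareHyp.exists_apply_self_le_add (h : PoincareHyp a e) (ha : ∀ φ, 0 ≤ a φ φ) {m : ℝ}
    (hm : 0 < m) (N : ℝ) :
    ∃ K : ℝ≥0, ∀ β₁ β₂ : H →L[ℝ] H →L[ℝ] ℝ, m ≤ β₁ e e → ‖β₁‖ ≤ N →
      (∀ φ ψ, β₂ φ ψ = β₂ ψ φ) → m ≤ β₂ e e → ‖β₂‖ ≤ N → ∀ φ, β₁ e φ = 0 →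
        β₁ φ φ ≤ β₂ (projAlong β₂ e φ) (projAlong β₂ e φ) + K * ‖β₁ - β₂‖ * a φ φ := by
  obtain ⟨C, hC⟩ := h.exists_norm_sq_le ha hm N
  refine ⟨(1 + N * ‖e‖ ^ 2 / m).toNNReal * C, fun β₁ β₂ hm₁ hN₁ hβ₂_symm hm₂ hN₂ φ hφ => ?_⟩
  have hN : 0 ≤ N := (norm_nonneg β₁).trans hN₁
  refine (apply_self_le_apply_projAlong_self_add hβ₂_symm (hm.trans_le hm₂) hφ).trans ?_
  rw [NNReal.coe_mul, Real.coe_toNNReal _ (by positivity)]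
  gcongr _ + ?_
  calc (1 + ‖β₂‖ * ‖e‖ ^ 2 / β₂ e e) * ‖β₁ - β₂‖ * ‖φ‖ ^ 2
      ≤ (1 + N * ‖e‖ ^ 2 / m) * ‖β₁ - β₂‖ * (C * a φ φ) := by
        gcongr
        exact hC β₁ hm₁ hN₁ φ hφ
    _ = (1 + N * ‖e‖ ^ 2 / m) * C * ‖β₁ - β₂‖ * a φ φ := by ring

theorem exists_lipschitzOnWith_toReal_genEigenvalue (ha_symm : ∀ φ ψ, a φ ψ = a ψ φ)
    (ha : ∀ φ, 0 ≤ a φ φ) (he : ∀ ψ, a e ψ = 0) (hP : PoincareHyp a e) (k : ℕ) {m : ℝ}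
    (hm : 0 < m) (N : ℝ) {Λ : ℝ≥0∞} (hΛ : Λ ≠ ⊤) :
    ∃ M : ℝ≥0, LipschitzOnWith M (fun β => (genEigenvalue a e k β).toReal)
      {β | (∀ φ ψ, β φ ψ = β ψ φ) ∧ (∀ φ, 0 ≤ β φ φ) ∧ m ≤ β e e ∧ ‖β‖ ≤ N ∧
        genEigenvalue a e k β ≤ Λ} := by
  obtain ⟨K, hK⟩ := hP.exists_apply_self_le_add ha hm N
  refine ⟨K * Λ.toNNReal ^ 2, LipschitzOnWith.of_le_add_mul _ ?_⟩
  rintro β₂ ⟨hβ₂_symm, hβ₂, hm₂, hN₂, hΛ₂⟩ β₁ ⟨-, hβ₁, hm₁, hN₁, hΛ₁⟩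
  have h_le := toReal_genEigenvalue_le_add_mul ha_symm ha he hβ₁ (hm.trans_le hm₁).ne' hβ₂
    (hm.trans_le hm₂).ne' (by positivity) (hK β₁ β₂ hm₁ hN₁ hβ₂_symm hm₂ hN₂)
    (ne_top_of_le_ne_top hΛ hΛ₁)
  refine h_le.trans ?_
  rw [dist_comm, dist_eq_norm]
  gcongr _ + ?_
  calc K * ‖β₁ - β₂‖ * ((genEigenvalue a e k β₁).toReal * (genEigenvalue a e k β₂).toReal)
      ≤ K * ‖β₁ - β₂‖ * (Λ.toReal * Λ.toReal) := by
        gcongr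
    _ = ↑(K * Λ.toNNReal ^ 2) * ‖β₁ - β₂‖ := by
        push_cast [ENNReal.coe_toNNReal_eq_toReal]
        ring

theorem stmt2_general (ha_symm : ∀ φ ψ, a φ ψ = a ψ φ) (ha_nonneg : ∀ φ, 0 ≤ a φ φ)
    (he : ∀ ψ, a e ψ = 0) (hPoincare : PoincareHyp a e) (k : ℕ)
    {β₀ : H →L[ℝ] H →L[ℝ] ℝ} (hβ₀e : 0 < β₀ e e) {Λ : ℝ≥0∞} (hΛ : Λ ≠ ⊤) :
    ∃ ε₀ > 0, ∃ M : ℝ≥0, LipschitzOnWith M (fun β => (genEigenvalue a e k β).toReal)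
      {β | (∀ φ ψ, β φ ψ = β ψ φ) ∧ (∀ φ, 0 ≤ β φ φ) ∧ ‖β - β₀‖ ≤ ε₀ ∧
        genEigenvalue a e k β ≤ Λ} := by
  obtain ⟨ε, hε, h_near⟩ := (nhds_basis_closedBall (x := β₀)).eventually_iff.1
    (eventually_lt_apply_self_and_norm_lt (half_lt_self hβ₀e) (lt_add_one ‖β₀‖))
  obtain ⟨M, hM⟩ := exists_lipschitzOnWith_toReal_genEigenvalue ha_symm ha_nonneg he hPoincare k
    (half_pos hβ₀e) (‖β₀‖ + 1) hΛ
  refine ⟨ε, hε, M, hM.mono ?_⟩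
  rintro β ⟨h_symm, h_nonneg, h_dist, h_le⟩
  obtain ⟨h_apply, h_norm⟩ := h_near ((dist_eq_norm β β₀).trans_le h_dist)
  exact ⟨h_symm, h_nonneg, h_apply.le, h_norm.le, h_le⟩

end Eigenvalue

/-- Abstract fixed-metric form of Proposition 1.1, local Lipschitz continuity:
around a form `β₀` with `λ_k(β₀) < ∞`, the map `β ↦ λ_k(β)` is Lipschitz on the set
of nearby forms where `λ_k ≤ λ_k(β₀) + 1`. -/
theorem stmt2 {H : Type*} [NormedAddCommGroup H] [InnerProductSpace ℝ H] [CompleteSpace H]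
    (a : H →L[ℝ] H →L[ℝ] ℝ)
    (ha_symm : ∀ φ ψ : H, a φ ψ = a ψ φ)
    (ha_nonneg : ∀ φ : H, 0 ≤ a φ φ)
    (ha_le : ∀ φ : H, a φ φ ≤ ‖φ‖ ^ 2)
    (e : H) (he : ∀ ψ : H, a e ψ = 0)
    (hPoincare : PoincareHyp a e)
    (k : ℕ) (hk : 1 ≤ k)
    (β₀ : H →L[ℝ] H →L[ℝ] ℝ)
    (hβ₀_symm : ∀ φ ψ : H, β₀ φ ψ = β₀ ψ φ)
    (hβ₀_nonneg : ∀ φ : H, 0 ≤ β₀ φ φ)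
    (hβ₀e : 0 < β₀ e e)
    (hβ₀fin : genEigenvalue a e k β₀ ≠ ⊤) :
    ∃ ε₀ > (0:ℝ), ∃ M : ℝ, 0 ≤ M ∧
      ∀ β₁ β₂ : H →L[ℝ] H →L[ℝ] ℝ,
        (∀ φ ψ : H, β₁ φ ψ = β₁ ψ φ) → (∀ φ : H, 0 ≤ β₁ φ φ) → 0 < β₁ e e →
        (∀ φ ψ : H, β₂ φ ψ = β₂ ψ φ) → (∀ φ : H, 0 ≤ β₂ φ φ) → 0 < β₂ e e →
        ‖β₁ - β₀‖ ≤ ε₀ → ‖β₂ - β₀‖ ≤ ε₀ →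
        genEigenvalue a e k β₁ ≤ genEigenvalue a e k β₀ + 1 →
        genEigenvalue a e k β₂ ≤ genEigenvalue a e k β₀ + 1 →
        |(genEigenvalue a e k β₁).toReal - (genEigenvalue a e k β₂).toReal|
          ≤ M * ‖β₁ - β₂‖ := by
  obtain ⟨ε₀, hε₀, M, hM⟩ := stmt2_general ha_symm ha_nonneg he hPoincare k hβ₀e
    (ENNReal.add_ne_top.2 ⟨hβ₀fin, ENNReal.one_ne_top⟩)
  exact ⟨ε₀, hε₀, M, M.2, fun β₁ β₂ hs₁ h₁ _ hs₂ h₂ _ hn₁ hn₂ hle₁ hle₂ =>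
    hM.norm_sub_le ⟨hs₁, h₁, hn₁, hle₁⟩ ⟨hs₂, h₂, hn₂, hle₂⟩⟩
end

section
/- (Energy of the cone extension and Wirtinger bound, from Step 3 of the proof of Proposition 3.2.) Let g : ℝ → ℝ be continuously differentiable and 2π-periodic, and define u on the closed unit disk of ℂ by u(0) = 0 and u(r e^{iθ}) = r g(θ) for 0 < r ≤ 1. Then ∫_{0<|z|<1} ‖∇u(z)‖² dz = (1/2) ( ∫₀^{2π} g(θ)² dθ + ∫₀^{2π} g′(θ)² dθ ). Moreover, if ∫₀^{2π} g(θ) dθ = 0, then ∫_{0<|z|<1} ‖∇u(z)‖² dz ≤ ∫₀^{2π} g′(θ)² dθ. -/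
open MeasureTheory Complex
open scoped ComplexConjugate

/-!
In the orthonormal frame `e^{iθ}, i e^{iθ}` the gradient of `u(r e^{iθ}) = r g(θ)` has the
components `∂ᵣ u = g(θ)` and `r⁻¹ ∂_θ u = g'(θ)`. Hence `‖∇u‖² = g² + g'²` depends on the angle
only, and integrating it in polar coordinates produces the factor `∫₀¹ r dr = 1/2`.
For Wirtinger's inequality, the `n`-th Fourier coefficient of `g'` is `i n` times that of `g`, and
the zeroth coefficient of `g` vanishes; compare the two Parseval sums term by term.
-/

/-- `u` is the cone over `g` on the punctured disk of radius `R`: it is homogeneous of degree one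
along rays from the origin, with angular profile `g`. The predicate does not prescribe `u` at the
origin or on the boundary circle. -/
def IsConeExtension (u : ℂ → ℝ) (g : ℝ → ℝ) (R : ℝ) : Prop :=
  ∀ r ∈ Set.Ioo 0 R, ∀ θ : ℝ, u (r * exp (θ * I)) = r * g θ

section PolarIntegral

variable {E : Type*} [NormedAddCommGroup E] [NormedSpace ℝ E] {s : Set ℝ}

lemma setIntegral_preimage_norm_eq_polar (hs : MeasurableSet s) (hs0 : s ⊆ Set.Ioi 0)
    (f : ℂ → E) :
    ∫ z in norm ⁻¹' s, f z
      = ∫ p in s ×ˢ Set.Ioo (-Real.pi) Real.pi, p.1 • f (p.1 * exp (p.2 * I)) := by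
  have hsector : polarCoord.target ∩ Prod.fst ⁻¹' s = s ×ˢ Set.Ioo (-Real.pi) Real.pi := by
    ext p
    exact ⟨fun hp => ⟨hp.2, hp.1.2⟩, fun hp => ⟨⟨hs0 hp.1, hp.2⟩, hp.1⟩⟩
  rw [← integral_indicator (measurable_norm hs), ← Complex.integral_comp_polarCoord_symm,
    ← hsector, ← setIntegral_indicator (measurable_fst hs)]
  refine setIntegral_congr_fun polarCoord.open_target.measurableSet fun p hp => ?_
  have hnorm : ‖Complex.polarCoord.symm p‖ = p.1 := by
    rw [norm_polarCoord_symm, abs_of_pos hp.1]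
  have hpolar : Complex.polarCoord.symm p = p.1 * exp (p.2 * I) := by
    rw [Complex.polarCoord_symm_apply, exp_mul_I, ofReal_cos, ofReal_sin]
  by_cases hps : p.1 ∈ s
  · simp [Set.indicator, hnorm, hps, ← hpolar, -Complex.polarCoord_symm_apply]
  · simp [Set.indicator, hnorm, hps, -Complex.polarCoord_symm_apply]

lemma setIntegral_preimage_norm_of_angular (hs : MeasurableSet s) (hs0 : s ⊆ Set.Ioi 0)
    {f : ℂ → E} {h : ℝ → E} (hper : Function.Periodic h (2 * Real.pi))
    (hf : ∀ r ∈ s, ∀ θ : ℝ, f (r * exp (θ * I)) = h θ) :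
    ∫ z in norm ⁻¹' s, f z = (∫ r in s, r) • ∫ θ in (0 : ℝ)..(2 * Real.pi), h θ := by
  have hcircle : ∫ θ in Set.Ioo (-Real.pi) Real.pi, h θ = ∫ θ in (0 : ℝ)..(2 * Real.pi), h θ := by
    rw [← integral_Ioc_eq_integral_Ioo,
      ← intervalIntegral.integral_of_le (by linarith [Real.pi_pos])]
    convert hper.intervalIntegral_add_eq (-Real.pi) 0 using 2 <;> ring
  calc
    ∫ z in norm ⁻¹' s, f z
        = ∫ p in s ×ˢ Set.Ioo (-Real.pi) Real.pi, p.1 • f (p.1 * exp (p.2 * I)) :=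
      setIntegral_preimage_norm_eq_polar hs hs0 f
    _ = ∫ p in s ×ˢ Set.Ioo (-Real.pi) Real.pi, p.1 • h p.2 :=
      setIntegral_congr_fun (hs.prod measurableSet_Ioo) fun p hp => by
        simp only [hf p.1 hp.1 p.2]
    _ = (∫ r in s, r) • ∫ θ in Set.Ioo (-Real.pi) Real.pi, h θ := by
      rw [Measure.volume_eq_prod, ← Measure.prod_restrict, integral_prod_smul (fun r : ℝ => r) h]
    _ = (∫ r in s, r) • ∫ θ in (0 : ℝ)..(2 * Real.pi), h θ := by rw [hcircle]

end PolarIntegral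

lemma norm_fderiv_of_hasGradientAt {F : Type*} [NormedAddCommGroup F] [InnerProductSpace ℝ F]
    [CompleteSpace F] {f : F → ℝ} {v x : F} (h : HasGradientAt f v x) : ‖fderiv ℝ f x‖ = ‖v‖ := by
  rw [h.hasFDerivAt.fderiv, LinearIsometryEquiv.norm_map]

lemma hasGradientAt_exp_re_mul_comp_im {ℓ : ℂ → ℂ} {ℓ' z : ℂ} (hℓ : HasDerivAt ℓ ℓ' z)
    {g : ℝ → ℝ} {g' : ℝ} (hg : HasDerivAt g g' (ℓ z).im) :
    HasGradientAt (fun w => Real.exp (ℓ w).re * g (ℓ w).im)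
      (Real.exp (ℓ z).re * (g (ℓ z).im + g' * I) * conj ℓ') z := by
  have hre : HasFDerivAt (fun w => (ℓ w).re) (reCLM.comp (ℓ' • (1 : ℂ →L[ℝ] ℂ))) z :=
    reCLM.hasFDerivAt.comp z hℓ.complexToReal_fderiv
  have him : HasFDerivAt (fun w => (ℓ w).im) (imCLM.comp (ℓ' • (1 : ℂ →L[ℝ] ℂ))) z :=
    imCLM.hasFDerivAt.comp z hℓ.complexToReal_fderiv
  rw [hasGradientAt_iff_hasFDerivAt]
  refine (hre.exp.mul (hg.comp_hasFDerivAt z him)).congr_fderiv ?_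
  ext v
  simp only [Function.comp_apply, add_apply, smul_apply, ContinuousLinearMap.comp_apply,
    one_apply_eq_self, smul_eq_mul, imCLM_apply, mul_im, reCLM_apply, mul_re,
    InnerProductSpace.toDual_apply_apply, Complex.inner, map_mul, conj_ofReal, map_add, conj_I,
    mul_neg, conj_conj, ofReal_re, add_re, neg_re, I_re, mul_zero,
    ofReal_im, I_im, mul_one, sub_self, neg_zero, add_zero, add_im, neg_im, zero_add, zero_mul,
    sub_zero]
  ring

namespace IsConeExtension

variable {u : ℂ → ℝ} {g : ℝ → ℝ} {R : ℝ}

lemma periodic (hu : IsConeExtension u g R) (hR : 0 < R) :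
    Function.Periodic g (2 * Real.pi) := fun θ => by
  have hmem : R / 2 ∈ Set.Ioo 0 R := ⟨half_pos hR, half_lt_self hR⟩
  refine mul_left_cancel₀ hmem.1.ne' ?_
  rw [← hu _ hmem, ← hu _ hmem]
  simp [add_mul, exp_add]

/- The logarithm is taken after a rotation by `-θ`, so that near the point `r e^{iθ}` it stays away
from the branch cut. -/
lemma eventuallyEq_exp_re_mul (hu : IsConeExtension u g R) {z : ℂ} (hz : ‖z‖ ∈ Set.Ioo 0 R)
    (θ : ℝ) :
    u =ᶠ[nhds z] fun w =>
      Real.exp (log (w * exp (-(θ * I))) + θ * I).re * g (log (w * exp (-(θ * I))) + θ * I).im := by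
  filter_upwards [continuous_norm.continuousAt.eventually_mem (isOpen_Ioo.mem_nhds hz)] with w hw
  set w' : ℂ := w * exp (-(θ * I)) with hw'
  have hww' : w = w' * exp (θ * I) := by
    rw [hw', mul_assoc, ← exp_add, neg_add_cancel, exp_zero, mul_one]
  have hnorm : ‖w'‖ = ‖w‖ := by
    rw [hw', norm_mul, ← neg_mul, ← ofReal_neg, norm_exp_ofReal_mul_I, mul_one]
  have hpolar : w = ‖w‖ * exp ((arg w' + θ : ℝ) * I) := by
    rw [ofReal_add, add_mul, exp_add, ← mul_assoc, ← hnorm, norm_mul_exp_arg_mul_I, ← hww']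
  have hre : Real.exp (log w' + θ * I).re = ‖w‖ := by
    rw [add_re, log_re, re_ofReal_mul, I_re, mul_zero, add_zero, hnorm, Real.exp_log hw.1]
  have him : (log w' + θ * I).im = arg w' + θ := by
    rw [add_im, log_im, im_ofReal_mul, I_im, mul_one]
  rw [hre, him, ← hu _ hw, ← hpolar]

lemma hasGradientAt (hu : IsConeExtension u g R) {r θ g' : ℝ} (hr : r ∈ Set.Ioo 0 R)
    (hg : HasDerivAt g g' θ) :
    HasGradientAt u ((g θ + g' * I) * exp (θ * I)) (r * exp (θ * I)) := by
  have hr0 : (r : ℂ) ≠ 0 := ofReal_ne_zero.mpr hr.1.ne'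
  set z : ℂ := r * exp (θ * I) with hz
  set ℓ : ℂ → ℂ := fun w => log (w * exp (-(θ * I))) + θ * I with hℓ
  have hnorm : ‖z‖ = r := by
    rw [hz, norm_mul, norm_exp_ofReal_mul_I, norm_real, Real.norm_of_nonneg hr.1.le, mul_one]
  have hzθ : z * exp (-(θ * I)) = r := by
    rw [hz, mul_assoc, ← exp_add, add_neg_cancel, exp_zero, mul_one]
  have hℓz : ℓ z = Real.log r + θ * I := by simp only [hℓ, hzθ, ofReal_log hr.1.le]
  have hre : Real.exp (ℓ z).re = r := by simp [hℓz, Real.exp_log hr.1]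
  have him : (ℓ z).im = θ := by simp [hℓz]
  have hℓ' : HasDerivAt ℓ (exp (-(θ * I)) / r) z := by
    have hrot : HasDerivAt (fun w => w * exp (-(θ * I))) (exp (-(θ * I))) z := by
      simpa using (hasDerivAt_id z).mul_const (exp (-(θ * I)))
    simpa only [hzθ] using (hrot.clog (by simp [hzθ, hr.1])).add_const (θ * I : ℂ)
  have hgrad : Real.exp (ℓ z).re * (g (ℓ z).im + g' * I) * conj (exp (-(θ * I)) / r)
      = (g θ + g' * I) * exp (θ * I) := by
    rw [hre, him, map_div₀, ← exp_conj, map_neg, map_mul, conj_ofReal, conj_ofReal, conj_I,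
      mul_neg, neg_neg]
    field_simp
  rw [← hgrad]
  exact (hasGradientAt_exp_re_mul_comp_im hℓ' (him.symm ▸ hg)).congr_of_eventuallyEq
    (hu.eventuallyEq_exp_re_mul (hnorm.symm ▸ hr) θ)

lemma norm_fderiv_sq (hu : IsConeExtension u g R) {r θ g' : ℝ} (hr : r ∈ Set.Ioo 0 R)
    (hg : HasDerivAt g g' θ) :
    ‖fderiv ℝ u (r * exp (θ * I))‖ ^ 2 = g θ ^ 2 + g' ^ 2 := by
  rw [norm_fderiv_of_hasGradientAt (hu.hasGradientAt hr hg), norm_mul, norm_exp_ofReal_mul_I,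
    mul_one, ← normSq_eq_norm_sq, normSq_add_mul_I]

lemma setIntegral_norm_fderiv_sq (hu : IsConeExtension u g R) (hR : 0 < R)
    (hg : Differentiable ℝ g) :
    ∫ z in {z : ℂ | 0 < ‖z‖ ∧ ‖z‖ < R}, ‖fderiv ℝ u z‖ ^ 2
      = R ^ 2 / 2 * ∫ θ in (0 : ℝ)..(2 * Real.pi), (g θ ^ 2 + deriv g θ ^ 2) := by
  have hper : Function.Periodic (fun θ => g θ ^ 2 + deriv g θ ^ 2) (2 * Real.pi) := fun θ => by
    have hderiv : deriv g (θ + 2 * Real.pi) = deriv g θ := by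
      rw [← deriv_comp_add_const, funext (hu.periodic hR)]
    simp only [hu.periodic hR θ, hderiv]
  have hradial : ∫ r in Set.Ioo 0 R, r = R ^ 2 / 2 := by
    rw [← integral_Ioc_eq_integral_Ioo, ← intervalIntegral.integral_of_le hR.le, integral_id]
    ring
  rw [← hradial, ← smul_eq_mul]
  exact setIntegral_preimage_norm_of_angular measurableSet_Ioo (fun r hr => hr.1) hper
    fun r hr θ => hu.norm_fderiv_sq hr (hg θ).hasDerivAt

end IsConeExtension

lemma memLp_restrict_Ioc_of_continuousOn {E : Type*} [NormedAddCommGroup E] {a b : ℝ} {f : ℝ → E}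
    (hf : ContinuousOn f (Set.Icc a b)) (p : ENNReal) :
    MemLp f p (volume.restrict (Set.Ioc a b)) := by
  obtain ⟨C, hC⟩ := isCompact_Icc.exists_bound_of_continuousOn hf
  have hsub : Set.Ioc a b ⊆ Set.Icc a b := Set.Ioc_subset_Icc_self
  exact .of_bound ((hf.mono hsub).aestronglyMeasurable measurableSet_Ioc) C
    (ae_restrict_of_forall_mem measurableSet_Ioc fun x hx => hC x (hsub hx))

lemma norm_fourierCoeffOn_of_hasDerivAt_of_eq {a b : ℝ} (hab : a < b) {f f' : ℝ → ℂ} {n : ℤ}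
    (hn : n ≠ 0) (hf : ContinuousOn f (Set.Icc a b))
    (hff' : ∀ x ∈ Set.Ioo a b, HasDerivAt f (f' x) x)
    (hf' : IntervalIntegrable f' volume a b) (hends : f a = f b) :
    ‖fourierCoeffOn hab f n‖ = (b - a) / (2 * Real.pi) * ‖fourierCoeffOn hab f' n‖ / |(n : ℝ)| := by
  rw [← Set.uIcc_of_le hab.le] at hf
  rw [fourierCoeffOn_of_hasDerivAt_Ioo hab hn hf
    (by simpa only [min_eq_left hab.le, max_eq_right hab.le] using hff') hf', hends, sub_self,
    mul_zero, zero_sub, ← ofReal_sub]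
  simp only [norm_mul, norm_div, norm_neg, norm_real, norm_one, norm_ofNat, norm_I, norm_intCast,
    Real.norm_of_nonneg Real.pi_pos.le, Real.norm_of_nonneg (sub_pos.mpr hab).le]
  field_simp

lemma integral_norm_sq_le_integral_norm_deriv_sq {a b : ℝ} (hab : a < b) {f f' : ℝ → ℂ}
    (hf : ContinuousOn f (Set.Icc a b)) (hff' : ∀ x ∈ Set.Ioo a b, HasDerivAt f (f' x) x)
    (hf' : MemLp f' 2 (volume.restrict (Set.Ioc a b))) (hends : f a = f b)
    (hmean : ∫ x in a..b, f x = 0) :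
    ∫ x in a..b, ‖f x‖ ^ 2 ≤ ((b - a) / (2 * Real.pi)) ^ 2 * ∫ x in a..b, ‖f' x‖ ^ 2 := by
  have hcoeff (n : ℤ) : ‖fourierCoeffOn hab f n‖ ^ 2
      ≤ ((b - a) / (2 * Real.pi)) ^ 2 * ‖fourierCoeffOn hab f' n‖ ^ 2 := by
    rcases eq_or_ne n 0 with rfl | hn
    · have hzero : fourierCoeffOn hab f 0 = 0 := by
        simp [fourierCoeffOn_eq_integral, hmean]
      simpa [hzero] using mul_nonneg (sq_nonneg _) (sq_nonneg _)
    · rw [norm_fourierCoeffOn_of_hasDerivAt_of_eq hab hn hf hff'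
        ((intervalIntegrable_iff_integrableOn_Ioc_of_le hab.le).mpr (hf'.integrable one_le_two))
        hends, ← mul_pow]
      have h1 : (1 : ℝ) ≤ |(n : ℝ)| := by exact_mod_cast Int.one_le_abs hn
      have hnonneg : 0 ≤ (b - a) / (2 * Real.pi) * ‖fourierCoeffOn hab f' n‖ :=
        mul_nonneg (div_nonneg (sub_pos.mpr hab).le Real.two_pi_pos.le) (norm_nonneg _)
      exact pow_le_pow_left₀ (div_nonneg hnonneg (abs_nonneg _)) (div_le_self hnonneg h1) 2
  have hparseval := hasSum_le hcoeff
    (hasSum_sq_fourierCoeffOn hab (memLp_restrict_Ioc_of_continuousOn hf 2))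
    ((hasSum_sq_fourierCoeffOn hab hf').mul_left _)
  rw [smul_eq_mul, smul_eq_mul, mul_left_comm] at hparseval
  exact le_of_mul_le_mul_left hparseval (inv_pos.mpr (sub_pos.mpr hab))

lemma integral_sq_le_integral_deriv_sq {a b : ℝ} (hab : a < b) {f f' : ℝ → ℝ}
    (hf : ContinuousOn f (Set.Icc a b)) (hff' : ∀ x ∈ Set.Ioo a b, HasDerivAt f (f' x) x)
    (hf' : MemLp f' 2 (volume.restrict (Set.Ioc a b))) (hends : f a = f b)
    (hmean : ∫ x in a..b, f x = 0) :
    ∫ x in a..b, f x ^ 2 ≤ ((b - a) / (2 * Real.pi)) ^ 2 * ∫ x in a..b, f' x ^ 2 := by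
  simpa using integral_norm_sq_le_integral_norm_deriv_sq hab
    (continuous_ofReal.comp_continuousOn hf)
    (fun x hx => (hff' x hx).ofReal_comp) hf'.ofReal (congrArg ofReal hends)
    (by simp [intervalIntegral.integral_ofReal, hmean])

theorem stmt16_general {g : ℝ → ℝ} (hg : Differentiable ℝ g)
    (hg' : MemLp (deriv g) 2 (volume.restrict (Set.Ioc 0 (2 * Real.pi))))
    {u : ℂ → ℝ} {R : ℝ} (hR : 0 < R) (hu : IsConeExtension u g R) :
    (∫ z in {z : ℂ | 0 < ‖z‖ ∧ ‖z‖ < R}, ‖fderiv ℝ u z‖ ^ 2)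
      = R ^ 2 / 2 * ((∫ θ in (0 : ℝ)..(2 * Real.pi), g θ ^ 2)
          + ∫ θ in (0 : ℝ)..(2 * Real.pi), deriv g θ ^ 2)
    ∧ ((∫ θ in (0 : ℝ)..(2 * Real.pi), g θ) = 0 →
        (∫ z in {z : ℂ | 0 < ‖z‖ ∧ ‖z‖ < R}, ‖fderiv ℝ u z‖ ^ 2)
          ≤ R ^ 2 * ∫ θ in (0 : ℝ)..(2 * Real.pi), deriv g θ ^ 2) := by
  have henergy := hu.setIntegral_norm_fderiv_sq hR hg
  rw [intervalIntegral.integral_add (f := fun θ => g θ ^ 2) (g := fun θ => deriv g θ ^ 2)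
    ((hg.continuous.pow 2).intervalIntegrable _ _)
    ((intervalIntegrable_iff_integrableOn_Ioc_of_le Real.two_pi_pos.le).mpr hg'.integrable_sq)]
    at henergy
  refine ⟨henergy, fun hmean => ?_⟩
  have hwirtinger := integral_sq_le_integral_deriv_sq Real.two_pi_pos hg.continuous.continuousOn
    (fun θ _ => (hg θ).hasDerivAt) hg' (hu.periodic hR).eq.symm hmean
  rw [sub_zero, div_self Real.two_pi_pos.ne', one_pow, one_mul] at hwirtinger
  rw [henergy]
  calc
    R ^ 2 / 2 * ((∫ θ in (0 : ℝ)..(2 * Real.pi), g θ ^ 2)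
          + ∫ θ in (0 : ℝ)..(2 * Real.pi), deriv g θ ^ 2)
        ≤ R ^ 2 / 2 * ((∫ θ in (0 : ℝ)..(2 * Real.pi), deriv g θ ^ 2)
          + ∫ θ in (0 : ℝ)..(2 * Real.pi), deriv g θ ^ 2) := by gcongr
    _ = R ^ 2 * ∫ θ in (0 : ℝ)..(2 * Real.pi), deriv g θ ^ 2 := by ring

/-- Energy of the cone extension and Wirtinger bound (Step 3 of the proof of
Proposition 3.2): if `g` is C¹ and 2π-periodic and `u(re^{iθ}) = r g(θ)`, `u(0) = 0`,
then `∫_{0<|z|<1} ‖∇u‖² = (1/2)(∫₀^{2π} g² + ∫₀^{2π} g′²)`; moreover if `g` has zero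
mean then `∫_{0<|z|<1} ‖∇u‖² ≤ ∫₀^{2π} g′²`. -/
theorem stmt16 (g : ℝ → ℝ) (hg : ContDiff ℝ 1 g)
    (hper : ∀ θ : ℝ, g (θ + 2 * Real.pi) = g θ)
    (u : ℂ → ℝ) (hu0 : u 0 = 0)
    (hu : ∀ r θ : ℝ, 0 < r → r ≤ 1 → u (r * exp (θ * I)) = r * g θ) :
    (∫ z in {z : ℂ | 0 < ‖z‖ ∧ ‖z‖ < 1}, ‖fderiv ℝ u z‖ ^ 2)
      = (1 / 2) * ((∫ θ in (0:ℝ)..(2 * Real.pi), (g θ) ^ 2)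
          + ∫ θ in (0:ℝ)..(2 * Real.pi), (deriv g θ) ^ 2)
    ∧ ((∫ θ in (0:ℝ)..(2 * Real.pi), g θ) = 0 →
        (∫ z in {z : ℂ | 0 < ‖z‖ ∧ ‖z‖ < 1}, ‖fderiv ℝ u z‖ ^ 2)
          ≤ ∫ θ in (0:ℝ)..(2 * Real.pi), (deriv g θ) ^ 2) := by
  simpa using stmt16_general (hg.differentiable one_ne_zero)
    (memLp_restrict_Ioc_of_continuousOn (hg.continuous_deriv le_rfl).continuousOn 2) one_pos
    fun r hr θ => hu r θ hr.1 hr.2.le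
end
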